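/- Let a and b be two distinct positive integers, and define the sequence (t_n)_{n≥1} by t_n = a if the sum of the binary digits of n is odd and t_n = b if the sum of the binary digits of n is even (the Thue–Morse sequence on the alphabet {a, b}). Then the real number [0; t₁, t₂, t₃, …] is transcendental. -/

import Mathlib

open Filter Topology

/-- Numerators of the convergents of `[0; t 1, t 2, ...]`. -/
def cfNum (t : ℕ → ℕ) : ℕ → ℕ
  | 0 => 0
  | 1 => 1
  | n + 2 => t (n + 2) * cfNum t (n + 1) + cfNum t n

/-- Denominators of the convergents of `[0; t 1, t 2, ...]`. -/
def cfDen (t : ℕ → ℕ) : ℕ → ℕ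
  | 0 => 1
  | 1 => t 1
  | n + 2 => t (n + 2) * cfDen t (n + 1) + cfDen t n

open Polynomial in
/-- Wronskian-type lemma. -/
lemma wron_lemma (s : ℕ) : ∀ (E : Submodule ℚ ℚ[X]) [Module.Finite ℚ E],
    Module.finrank ℚ E ≤ s →
    ∃ S : Finset ℚ, ∀ x ∉ S, ∀ f ∈ E, (X - C x) ^ s ∣ f → f = 0 := by
  induction s with
  | zero =>
    intro E _ hE
    have h0 : E = ⊥ := by
      apply Submodule.finrank_eq_zero.mp; omega
    refine ⟨∅, fun x _ f hf _ => ?_⟩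
    rw [h0] at hf
    simpa using hf
  | succ s ih =>
    intro E _ hE
    by_cases h0 : E = ⊥
    · refine ⟨∅, fun x _ f hf _ => ?_⟩
      rw [h0] at hf
      simpa using hf
    obtain ⟨e, he, hne⟩ := Submodule.exists_mem_ne_zero_of_ne_bot h0
    let φ : ℚ[X] →ₗ[ℚ] ℚ[X] :=
      { toFun := fun f => derivative f * e - f * derivative e
        map_add' := by intro f g; simp only [derivative_add]; ring
        map_smul' := by
          intro c f
          simp only [derivative_smul, RingHom.id_apply, smul_sub, smul_mul_assoc] }
    let ψ : E →ₗ[ℚ] ℚ[X] := φ.domRestrict E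
    have hrk := LinearMap.finrank_range_add_finrank_ker ψ
    have hker : 0 < Module.finrank ℚ (LinearMap.ker ψ) := by
      rw [Nat.pos_iff_ne_zero]
      intro h
      have h' := Submodule.finrank_eq_zero.mp h
      have hk : (⟨e, he⟩ : E) ∈ LinearMap.ker ψ := by
        simp [ψ, φ]; ring
      rw [h', Submodule.mem_bot] at hk
      exact hne (congrArg Subtype.val hk)
    obtain ⟨S, hS⟩ := ih (LinearMap.range ψ) (by omega)
    classical
    refine ⟨S ∪ e.roots.toFinset, fun x hx f hf hd => ?_⟩
    simp only [Finset.mem_union, not_or, Multiset.mem_toFinset, mem_roots hne] at hx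
    have h1 : φ f = 0 := by
      apply hS x hx.1
      · exact ⟨⟨f, hf⟩, rfl⟩
      · have hd1 : (X - C x) ^ s ∣ derivative f := by
          have := pow_sub_one_dvd_derivative_of_pow_dvd hd
          simpa using this
        have hd2 : (X - C x) ^ s ∣ f := dvd_trans (pow_dvd_pow _ (Nat.le_succ s)) hd
        exact dvd_sub (Dvd.dvd.mul_right hd1 _) (Dvd.dvd.mul_right hd2 _)
    by_contra hf0
    have hroot : f.IsRoot x := by
      apply dvd_iff_isRoot.mp
      exact dvd_trans (dvd_pow_self _ (Nat.succ_ne_zero s)) hd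
    have hm := derivative_rootMultiplicity_of_root hroot
    have hpos : 0 < f.rootMultiplicity x := (rootMultiplicity_pos hf0).mpr hroot
    have heq : derivative f * e = f * derivative e := sub_eq_zero.mp h1
    have hdf : derivative f ≠ 0 := by
      intro h
      have := derivative_eq_zero.mp h
      rw [eq_C_of_natDegree_eq_zero this] at hroot hf0
      simp at hroot
      simp [hroot] at hf0
    have hm2 : (derivative f * e).rootMultiplicity x = f.rootMultiplicity x - 1 := by
      rw [rootMultiplicity_mul (mul_ne_zero hdf hne), hm, rootMultiplicity_eq_zero hx.2]
      simp
    have hne2 : f * derivative e ≠ 0 := heq ▸ mul_ne_zero hdf hne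
    rw [heq, rootMultiplicity_mul hne2] at hm2
    omega

/-- Hasse derivative of order `j` at `x` of the polynomial with coefficients `c`. -/
def hasseEv {K : Type*} [CommRing K] {m : ℕ} (r : Fin m → ℕ) (c : (∀ h, Fin (r h + 1)) → K)
    (j : Fin m → ℕ) (x : Fin m → K) : K :=
  ∑ i : (∀ h, Fin (r h + 1)), c i * ∏ h, (((i h).1.choose (j h) : ℕ) : K) * x h ^ ((i h).1 - j h)

lemma hasseEv_cons {K : Type*} [CommRing K] {m : ℕ} (r : Fin (m + 1) → ℕ)
    (c : (∀ h, Fin (r h + 1)) → K) (j0 : ℕ) (j : Fin m → ℕ) (x : Fin (m + 1) → K) :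
    hasseEv r c (Fin.cons j0 j : Fin (m + 1) → ℕ) x =
      ∑ i0 : Fin (r 0 + 1), (hasseEv (fun h => r h.succ)
        (fun i' => c (Fin.cons i0 i')) j (fun h => x h.succ)) *
          ((((i0.1.choose j0 : ℕ) : K)) * x 0 ^ (i0.1 - j0)) := by
  unfold hasseEv
  rw [← (Fin.consEquiv (fun h => Fin (r h + 1))).sum_comp, Fintype.sum_prod_type]
  refine Finset.sum_congr rfl fun i0 _ => ?_
  rw [Finset.sum_mul]
  refine Finset.sum_congr rfl fun i' _ => ?_
  rw [Fin.prod_univ_succ]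
  simp [Fin.consEquiv]
  ring

open Polynomial in
theorem nonvanish (m : ℕ) : ∀ (r : Fin m → ℕ) (c : (∀ h, Fin (r h + 1)) → ℚ), c ≠ 0 →
    ∀ (x : Fin m → ℕ → ℚ), (∀ h, Function.Injective (x h)) →
    ∀ᶠ k in atTop, ∃ j : Fin m → ℕ, (∀ h, j h < ∏ h' ∈ Finset.Ioi h, (r h' + 1)) ∧
      hasseEv r c j (fun h => x h k) ≠ 0 := by
  induction m with
  | zero =>
    intro r c hc x hx
    refine Eventually.of_forall fun k => ⟨Fin.elim0, fun h => h.elim0, ?_⟩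
    obtain ⟨i, hi⟩ := Function.ne_iff.mp hc
    simp only [hasseEv, Finset.univ_eq_empty, Finset.prod_empty, mul_one]
    rw [Fintype.sum_unique]
    intro h0
    exact hi ((congrArg c (Subsingleton.elim i _)).trans h0)
  | succ m ih =>
    intro r c hc x hx
    obtain ⟨i, hi⟩ := Function.ne_iff.mp hc
    have hc' : (fun i' => c (Fin.cons (i 0) i')) ≠ (0 : (∀ h : Fin m, Fin (r h.succ + 1)) → ℚ) := by
      intro h
      apply hi
      have := congrFun h (Fin.tail i)
      simpa using this
    have H := ih (fun h => r h.succ) _ hc' (fun h => x h.succ) (fun h => hx _)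
    let fp : (∀ h : Fin m, Fin (r h.succ + 1)) → ℚ[X] := fun i' =>
      ∑ i0 : Fin (r 0 + 1), C (c (Fin.cons i0 i')) * X ^ i0.1
    let E : Submodule ℚ ℚ[X] := Submodule.span ℚ (Set.range fp)
    have hfin : Module.Finite ℚ E := Module.Finite.span_of_finite ℚ (Set.finite_range fp)
    have hrk : Module.finrank ℚ E ≤ ∏ h : Fin m, (r h.succ + 1) := by
      have := finrank_range_le_card (R := ℚ) fp
      simpa [Set.finrank, Fintype.card_pi] using this
    obtain ⟨S, hS⟩ := wron_lemma _ E hrk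
    have hS' : ∀ᶠ k in atTop, x 0 k ∉ S := by
      rw [← Nat.cofinite_eq_atTop]
      exact (hx 0).tendsto_cofinite.eventually (S.finite_toSet.eventually_cofinite_notMem)
    filter_upwards [H, hS'] with k hk hkS
    obtain ⟨j', hj', hne⟩ := hk
    by_contra hcon
    push Not at hcon
    apply hne
    let l : (∀ h : Fin m, Fin (r h.succ + 1)) → ℚ := fun i' =>
      ∏ h, ((((i' h).1.choose (j' h) : ℕ)) : ℚ) * x h.succ k ^ ((i' h).1 - j' h)
    let g : Fin (r 0 + 1) → ℚ := fun i0 => hasseEv (fun h => r h.succ)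
        (fun i' => c (Fin.cons i0 i')) j' (fun h => x h.succ k)
    let f : ℚ[X] := ∑ i0 : Fin (r 0 + 1), C (g i0) * X ^ i0.1
    have hfE : f ∈ E := by
      have : f = ∑ i', l i' • fp i' := by
        simp only [f, fp, g, hasseEv, map_sum, Finset.sum_mul, Finset.smul_sum]
        rw [Finset.sum_comm]
        refine Finset.sum_congr rfl fun i' _ => Finset.sum_congr rfl fun i0 _ => ?_
        rw [smul_eq_C_mul, ← mul_assoc, ← C_mul, mul_comm (l i')]
      rw [this]
      exact Submodule.sum_mem _ fun i' _ => Submodule.smul_mem _ _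
        (Submodule.subset_span ⟨i', rfl⟩)
    have hf0 : f = 0 := by
      apply hS _ hkS f hfE
      rw [X_sub_C_pow_dvd_iff, X_pow_dvd_iff]
      intro d hd
      have h1 := hcon (Fin.cons d j') (by
        intro h
        refine Fin.cases ?_ (fun h => ?_) h
        · rw [Fin.prod_Ioi_zero]; simpa using hd
        · rw [Fin.prod_Ioi_succ]; simpa using hj' h)
      rw [hasseEv_cons] at h1
      change (taylor (x 0 k) f).coeff d = 0
      rw [taylor_coeff]
      rw [← h1]
      simp only [f, map_sum, eval_finsetSum]
      refine Finset.sum_congr rfl fun i0 _ => ?_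
      rw [C_mul_X_pow_eq_monomial, hasseDeriv_monomial, eval_monomial]
      simp only [g]
      ring
    have h2 : f.coeff (i 0).1 = g (i 0) := by
      simp only [f, finsetSum_coeff, coeff_C_mul, coeff_X_pow]
      rw [Finset.sum_eq_single (i 0)]
      · simp
      · intro b _ hb
        rw [if_neg, mul_zero]
        intro h; exact hb (Fin.ext h.symm)
      · simp
    rw [hf0] at h2
    simpa [g] using h2.symm

lemma mean_zero (m : ℕ) : ∀ (n : Fin m → ℕ) (y : ∀ h, Fin (n h) → ℝ) (_ : ∀ h, ∑ a, y h a = 0),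
    ∑ i : (∀ h, Fin (n h)), ∑ h, y h (i h) = 0 := by
  induction m with
  | zero => intro n y _; simp
  | succ m ih =>
    intro n y hy
    rw [← (Fin.consEquiv (fun h => Fin (n h))).sum_comp, Fintype.sum_prod_type]
    simp only [Fin.sum_univ_succ, Fin.consEquiv, Equiv.coe_fn_mk, Fin.cons_zero, Fin.cons_succ,
      Finset.sum_add_distrib]
    rw [ih (fun h => n h.succ) (fun h => y h.succ) (fun h => hy _)]
    simp [← Finset.mul_sum, hy 0]

lemma second_moment (m : ℕ) : ∀ (n : Fin m → ℕ) (y : ∀ h, Fin (n h) → ℝ)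
    (_ : ∀ h, ∑ a, y h a = 0) (B : Fin m → ℝ) (_ : ∀ h a, y h a ^ 2 ≤ B h),
    ∑ i : (∀ h, Fin (n h)), (∑ h, y h (i h)) ^ 2 ≤ (∏ h, (n h : ℝ)) * ∑ h, B h := by
  induction m with
  | zero => intro n y _ B _; simp
  | succ m ih =>
    intro n y hy B hB
    rw [← (Fin.consEquiv (fun h => Fin (n h))).sum_comp, Fintype.sum_prod_type]
    simp only [Fin.sum_univ_succ, Fin.consEquiv, Equiv.coe_fn_mk, Fin.cons_zero, Fin.cons_succ,
      Fin.prod_univ_succ]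
    have h1 := ih (fun h => n h.succ) (fun h => y h.succ) (fun h => hy _) (fun h => B h.succ)
      (fun h => hB _)
    have h2 := mean_zero m (fun h => n h.succ) (fun h => y h.succ) (fun h => hy _)
    set P : ℝ := ∏ h : Fin m, (n h.succ : ℝ) with hP
    have hstep : ∀ a : Fin (n 0), ∑ i : (∀ h : Fin m, Fin (n h.succ)),
        (y 0 a + ∑ h : Fin m, y h.succ (i h)) ^ 2 ≤ P * B 0 + P * ∑ h : Fin m, B h.succ := by
      intro a
      have : ∑ i : (∀ h : Fin m, Fin (n h.succ)), (y 0 a + ∑ h : Fin m, y h.succ (i h)) ^ 2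
        = P * y 0 a ^ 2 + ∑ i : (∀ h : Fin m, Fin (n h.succ)),
          (∑ h : Fin m, y h.succ (i h)) ^ 2 := by
        simp only [add_sq, Finset.sum_add_distrib, ← Finset.mul_sum, h2]
        simp [hP]
      rw [this]
      have hP0 : 0 ≤ P := Finset.prod_nonneg fun _ _ => Nat.cast_nonneg _
      have := mul_le_mul_of_nonneg_left (hB 0 a) hP0
      linarith
    calc _ ≤ ∑ _a : Fin (n 0), (P * B 0 + P * ∑ h : Fin m, B h.succ) :=
          Finset.sum_le_sum fun a _ => hstep a
      _ = _ := by simp; ring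

lemma taylor_one {K : Type*} [CommRing K] (r n j : ℕ) (hn : n ≤ r) (x ρ : K) :
    ((n.choose j : ℕ) : K) * x ^ (n - j) =
      ∑ a : Fin (r + 1), (((n.choose a.1 : ℕ) : K) * ρ ^ (n - a.1)) *
        (((a.1.choose j : ℕ) : K) * (x - ρ) ^ (a.1 - j)) := by
  rw [Fin.sum_univ_eq_sum_range (fun a => (((n.choose a : ℕ) : K) * ρ ^ (n - a)) *
        (((a.choose j : ℕ) : K) * (x - ρ) ^ (a - j)))]
  by_cases hj : n < j
  · rw [Nat.choose_eq_zero_of_lt hj, Nat.cast_zero, zero_mul, Finset.sum_eq_zero]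
    intro a _
    by_cases ha : a < j
    · simp [Nat.choose_eq_zero_of_lt ha]
    · simp [Nat.choose_eq_zero_of_lt (show n < a by omega)]
  push Not at hj
  have h1 : ∑ a ∈ Finset.range (r + 1), (((n.choose a : ℕ) : K) * ρ ^ (n - a)) *
        (((a.choose j : ℕ) : K) * (x - ρ) ^ (a - j)) =
      ∑ a ∈ Finset.range (j + (n - j + 1)), (((n.choose a : ℕ) : K) * ρ ^ (n - a)) *
        (((a.choose j : ℕ) : K) * (x - ρ) ^ (a - j)) := by
    symm
    apply Finset.sum_subset
    · intro a ha; simp only [Finset.mem_range] at *; omega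
    · intro a _ ha
      simp only [Finset.mem_range] at ha
      simp [Nat.choose_eq_zero_of_lt (show n < a by omega)]
  rw [h1, Finset.sum_range_add, Finset.sum_eq_zero, zero_add]
  · have hx : x = (x - ρ) + ρ := by ring
    conv_lhs => rw [hx, add_pow, Finset.mul_sum]
    refine Finset.sum_congr rfl fun b hb => ?_
    have hb' : b ≤ n - j := by simp only [Finset.mem_range] at hb; omega
    have hc : n.choose (j + b) * (j + b).choose j = n.choose j * (n - j).choose b := by
      have := Nat.choose_mul (n := n) (k := j + b) (s := j) (by omega)
      rw [this]; congr 2; omega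
    have hc' : ((n.choose (j + b) : ℕ) : K) * (((j + b).choose j : ℕ) : K) =
      ((n.choose j : ℕ) : K) * (((n - j).choose b : ℕ) : K) := by exact_mod_cast congrArg _ hc
    rw [show j + b - j = b by omega, show n - (j + b) = n - j - b by omega]
    linear_combination (-(ρ ^ (n - j - b) * (x - ρ) ^ b)) * hc'
  · intro a ha
    simp only [Finset.mem_range] at ha
    simp [Nat.choose_eq_zero_of_lt ha]

lemma hasse_taylor {K : Type*} [CommRing K] {m : ℕ} (r : Fin m → ℕ)
    (c : (∀ h, Fin (r h + 1)) → K) (j : Fin m → ℕ) (x ρ : Fin m → K) :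
    hasseEv r c j x = hasseEv r (fun i => hasseEv r c (fun h => (i h).1) ρ) j
      (fun h => x h - ρ h) := by
  unfold hasseEv
  simp only [Finset.sum_mul]
  rw [Finset.sum_comm]
  refine Finset.sum_congr rfl fun i _ => ?_
  have : ∏ h, (((i h).1.choose (j h) : ℕ) : K) * x h ^ ((i h).1 - j h) =
      ∏ h, ∑ a : Fin (r h + 1), ((((i h).1.choose a.1 : ℕ) : K) * ρ h ^ ((i h).1 - a.1)) *
        (((a.1.choose (j h) : ℕ) : K) * (x h - ρ h) ^ (a.1 - j h)) :=
    Finset.prod_congr rfl fun h _ => taylor_one (r h) _ _ (by have := (i h).2; omega) _ _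
  rw [this, Finset.prod_univ_sum, Fintype.piFinset_univ, Finset.mul_sum]
  refine Finset.sum_congr rfl fun p _ => ?_
  rw [Finset.prod_mul_distrib, mul_assoc]

lemma sum_centered (r : ℕ) : ∑ a : Fin (r + 1), (2 * (a.1 : ℝ) - r) = 0 := by
  rw [Fin.sum_univ_eq_sum_range (fun a => (2 * (a : ℝ) - r)), Finset.sum_sub_distrib,
    ← Finset.mul_sum]
  have := Finset.sum_range_id_mul_two (r + 1)
  rw [Nat.add_sub_cancel] at this
  have h2 := congrArg (Nat.cast : ℕ → ℝ) this
  push_cast at h2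
  simp
  linarith

lemma bad_count {m : ℕ} (r W : Fin m → ℕ) (R : ℕ) (hR : 0 < R) (hrW : ∀ h, r h * W h = R)
    (Bad : Finset (∀ h, Fin (r h + 1)))
    (hBad : ∀ i ∈ Bad, 12 * ∑ h, (i h).1 * W h ≤ 5 * m * R) :
    Bad.card * m ≤ 36 * ∏ h, (r h + 1) := by
  rcases Nat.eq_zero_or_pos m with hm | hm
  · simp [hm]
  have h1 := second_moment m (fun h => r h + 1) (fun h a => (2 * (a.1 : ℝ) - r h) * W h)
    (fun h => by rw [← Finset.sum_mul, sum_centered, zero_mul]) (fun _ => (R : ℝ) ^ 2)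
    (fun h a => by
      have ha : (a.1 : ℝ) ≤ r h := by
        have := a.2
        exact_mod_cast (by omega : a.1 ≤ r h)
      have ha0 : (0 : ℝ) ≤ a.1 := Nat.cast_nonneg _
      have e : (R : ℝ) = r h * W h := by exact_mod_cast (hrW h).symm
      rw [e, mul_pow, mul_pow]
      apply mul_le_mul_of_nonneg_right _ (sq_nonneg _)
      nlinarith)
  simp only [Finset.sum_const, Finset.card_univ, Fintype.card_fin, nsmul_eq_mul] at h1
  have h2 : ∑ i ∈ Bad, ((m : ℝ) * R / 6) ^ 2 ≤
      ∑ i : (∀ h, Fin (r h + 1)), (∑ h, (2 * ((i h).1 : ℝ) - r h) * W h) ^ 2 := by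
    calc _ ≤ ∑ i ∈ Bad, (∑ h, (2 * ((i h).1 : ℝ) - r h) * W h) ^ 2 := by
          apply Finset.sum_le_sum
          intro i hi
          have hb := hBad i hi
          have hb' : (12 : ℝ) * ∑ h, ((i h).1 : ℝ) * W h ≤ 5 * m * R := by exact_mod_cast hb
          have e : ∑ h, (2 * ((i h).1 : ℝ) - r h) * W h =
              2 * (∑ h, ((i h).1 : ℝ) * W h) - m * R := by
            simp only [sub_mul, Finset.sum_sub_distrib, mul_assoc, ← Finset.mul_sum]
            congr 1
            rw [Finset.sum_congr rfl (fun h _ => show (r h : ℝ) * W h = R by exact_mod_cast hrW h)]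
            simp
          rw [e]
          have : (0 : ℝ) ≤ m * R := by positivity
          nlinarith
      _ ≤ _ := Finset.sum_le_sum_of_subset_of_nonneg (Finset.subset_univ _)
          (fun _ _ _ => sq_nonneg _)
  rw [Finset.sum_const, nsmul_eq_mul] at h2
  have h3 := h2.trans h1
  have hm' : (0 : ℝ) < m := by exact_mod_cast hm
  have hR' : (0 : ℝ) < R := by exact_mod_cast hR
  have h4 : (Bad.card : ℝ) * m ≤ 36 * ∏ h, ((r h : ℝ) + 1) := by
    push_cast at h3
    have e1 : (Bad.card : ℝ) * (m * R / 6) ^ 2 = (Bad.card * m / 36) * (m * R ^ 2) := by ring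
    have e2 : (∏ h, ((r h : ℝ) + 1)) * (m * (R : ℝ) ^ 2) =
      (∏ h, ((r h : ℝ) + 1)) * (m * R ^ 2) := rfl
    rw [e1] at h3
    have := le_of_mul_le_mul_right h3 (by positivity)
    linarith
  exact_mod_cast h4

open IntermediateField in
lemma aux_poly (ρ : ℝ) (hρ : IsAlgebraic ℚ ρ) {m : ℕ}
    (hm : 36 * Module.finrank ℚ ℚ⟮ρ⟯ < m)
    (r W : Fin m → ℕ) (R : ℕ) (hR : 0 < R) (hrW : ∀ h, r h * W h = R) :
    ∃ c : (∀ h, Fin (r h + 1)) → ℚ, c ≠ 0 ∧ ∀ i : (∀ h, Fin (r h + 1)),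
      12 * ∑ h, (i h).1 * W h ≤ 5 * m * R →
      hasseEv r (fun i => (c i : ℝ)) (fun h => (i h).1) (fun _ => ρ) = 0 := by
  classical
  let Bad : Finset (∀ h, Fin (r h + 1)) :=
    Finset.univ.filter (fun i => 12 * ∑ h, (i h).1 * W h ≤ 5 * m * R)
  have hcard := bad_count r W R hR hrW Bad (fun i hi => (Finset.mem_filter.mp hi).2)
  have : FiniteDimensional ℚ ℚ⟮ρ⟯ := adjoin.finiteDimensional hρ.isIntegral
  let L : ((∀ h, Fin (r h + 1)) → ℚ) →ₗ[ℚ] (Bad → ℚ⟮ρ⟯) :=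
    { toFun := fun c j => hasseEv r (fun i => algebraMap ℚ ℚ⟮ρ⟯ (c i)) (fun h => (j.1 h).1)
        (fun _ => AdjoinSimple.gen ℚ ρ)
      map_add' := by
        intro c c'
        ext1 j
        simp [hasseEv, add_mul, Finset.sum_add_distrib]
      map_smul' := by
        intro s c
        ext1 j
        simp [hasseEv, Finset.mul_sum, mul_assoc, Algebra.smul_def] }
  have hlt : Module.finrank ℚ (Bad → ℚ⟮ρ⟯) < Module.finrank ℚ ((∀ h, Fin (r h + 1)) → ℚ) := by
    rw [Module.finrank_pi_fintype, Module.finrank_pi]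
    simp only [Finset.sum_const, Finset.card_univ, Fintype.card_coe, smul_eq_mul, Fintype.card_pi,
      Fintype.card_fin]
    have hpos : 0 < ∏ h, (r h + 1) := Finset.prod_pos fun h _ => Nat.succ_pos _
    by_contra hcon
    push Not at hcon
    have : (∏ h, (r h + 1)) * m ≤ 36 * (∏ h, (r h + 1)) * Module.finrank ℚ ℚ⟮ρ⟯ := by
      calc (∏ h, (r h + 1)) * m ≤ (Bad.card * Module.finrank ℚ ℚ⟮ρ⟯) * m :=
            Nat.mul_le_mul_right _ hcon
        _ = (Bad.card * m) * Module.finrank ℚ ℚ⟮ρ⟯ := by ring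
        _ ≤ _ := Nat.mul_le_mul_right _ hcard
    nlinarith
  obtain ⟨c, hc, hc0⟩ := Submodule.exists_mem_ne_zero_of_ne_bot
    (LinearMap.ker_ne_bot_of_finrank_lt (f := L) hlt)
  refine ⟨c, hc0, fun i hi => ?_⟩
  have h1 : L c ⟨i, Finset.mem_filter.mpr ⟨Finset.mem_univ _, hi⟩⟩ = 0 := by
    rw [LinearMap.mem_ker.mp hc]; rfl
  have h2 := congrArg (algebraMap ℚ⟮ρ⟯ ℝ) h1
  simp only [L, LinearMap.coe_mk, AddHom.coe_mk, hasseEv, map_sum, map_mul, map_prod, map_pow,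
    map_natCast, AdjoinSimple.algebraMap_gen, map_zero] at h2
  simp only [hasseEv]
  rw [← h2]
  refine Finset.sum_congr rfl fun i _ => ?_
  congr 1

lemma lacunary (m : ℕ) : ∃ e : Fin m → ℕ, ∀ h, 24 * ∏ h' ∈ Finset.Ioi h, (4 ^ e h' + 1) ≤ 4 ^ e h := by
  induction m with
  | zero => exact ⟨Fin.elim0, fun h => h.elim0⟩
  | succ m ih =>
    obtain ⟨e, he⟩ := ih
    refine ⟨Fin.cons (24 * ∏ h', (4 ^ e h' + 1)) e, fun h => ?_⟩
    refine Fin.cases ?_ (fun h => ?_) h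
    · rw [Fin.prod_Ioi_zero]
      simpa using (Nat.lt_pow_self (by norm_num)).le
    · rw [Fin.prod_Ioi_succ]
      simpa using he h

lemma scale_bounds (Q : ℕ → ℝ) (hQ : ∀ k, 1 ≤ Q k) (c C : ℝ) (hc : 0 < c) (hC : 0 < C)
    (hlo : ∀ k, c * Q k ^ 4 ≤ Q (k + 1)) (hhi : ∀ k, Q (k + 1) ≤ C * Q k ^ 4) (G : ℕ) :
    ∃ c' C' : ℝ, 0 < c' ∧ 0 < C' ∧ ∀ k, c' * Q k ^ (4 ^ G) ≤ Q (k + G) ∧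
      Q (k + G) ≤ C' * Q k ^ (4 ^ G) := by
  induction G with
  | zero => exact ⟨1, 1, one_pos, one_pos, fun k => by simp⟩
  | succ G ih =>
    obtain ⟨c', C', hc', hC', h⟩ := ih
    refine ⟨c * c' ^ 4, C * C' ^ 4, by positivity, by positivity, fun k => ?_⟩
    have hq : 0 < Q k := lt_of_lt_of_le one_pos (hQ k)
    have hqG : 0 < Q (k + G) := lt_of_lt_of_le one_pos (hQ _)
    obtain ⟨h1, h2⟩ := h k
    constructor
    · calc c * c' ^ 4 * Q k ^ 4 ^ (G + 1) = c * (c' * Q k ^ 4 ^ G) ^ 4 := by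
            rw [pow_succ 4 G, pow_mul]; ring
        _ ≤ c * Q (k + G) ^ 4 := by gcongr
        _ ≤ _ := hlo _
    · calc Q (k + G + 1) ≤ C * Q (k + G) ^ 4 := hhi _
        _ ≤ C * (C' * Q k ^ 4 ^ G) ^ 4 := by gcongr
        _ = _ := by rw [pow_succ 4 G, pow_mul]; ring

/-- The product appearing in the size estimate tends to zero. -/
lemma size_tendsto (ρ : ℝ) (x : ℕ → ℚ) (M : ℕ → ℕ) (Q : ℕ → ℝ) (hQ : ∀ k, 1 ≤ Q k)
    (hQt : Tendsto Q atTop atTop) (c C : ℝ) (hc : 0 < c) (hC : 0 < C)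
    (hlo : ∀ k, c * Q k ^ 4 ≤ Q (k + 1)) (hhi : ∀ k, Q (k + 1) ≤ C * Q k ^ 4)
    (happ : ∀ k, |(x k : ℝ) - ρ| * Q k ^ 2 ≤ C) (hMQ : ∀ k, (M k : ℝ) ^ 4 ≤ C * Q k ^ 3)
    {m : ℕ} (G r n : Fin m → ℕ) (hn : 3 * (∑ h, r h * 4 ^ G h) < 8 * ∑ h, n h * 4 ^ G h) :
    Tendsto (fun k => ∏ h, ((M (k + G h) : ℝ) ^ r h * |(x (k + G h) : ℝ) - ρ| ^ n h))
      atTop (𝓝 0) := by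
  choose c' C' hc' hC' hb using fun h => scale_bounds Q hQ c C hc hC hlo hhi (G h)
  set K : ℝ := ∏ h, ((C * C' h ^ 3) ^ r h * (C / c' h ^ 2) ^ (4 * n h)) with hK
  have hK0 : 0 ≤ K := Finset.prod_nonneg fun h _ => by
    have := hc' h; have := hC' h; positivity
  have key : ∀ k, (∏ h, ((M (k + G h) : ℝ) ^ r h * |(x (k + G h) : ℝ) - ρ| ^ n h)) ^ 4
      ≤ K / Q k := by
    intro k
    have hq : 0 < Q k := lt_of_lt_of_le one_pos (hQ k)
    have step : ∀ h, ((M (k + G h) : ℝ) ^ r h * |(x (k + G h) : ℝ) - ρ| ^ n h) ^ 4 ≤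
        ((C * C' h ^ 3) ^ r h * (C / c' h ^ 2) ^ (4 * n h)) *
          (Q k ^ (3 * (r h * 4 ^ G h)) / Q k ^ (8 * (n h * 4 ^ G h))) := by
      intro h
      obtain ⟨b1, b2⟩ := hb h k
      have hc'h := hc' h
      have hC'h := hC' h
      have hqG : 0 < Q (k + G h) := lt_of_lt_of_le one_pos (hQ _)
      have m1 : (M (k + G h) : ℝ) ^ 4 ≤ (C * C' h ^ 3) * Q k ^ (3 * 4 ^ G h) := by
        calc _ ≤ C * Q (k + G h) ^ 3 := hMQ _
          _ ≤ C * (C' h * Q k ^ 4 ^ G h) ^ 3 := by gcongr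
          _ = _ := by rw [mul_comm 3, pow_mul]; ring
      have m2 : |(x (k + G h) : ℝ) - ρ| ≤ (C / c' h ^ 2) / Q k ^ (2 * 4 ^ G h) := by
        rw [div_div, le_div_iff₀ (by positivity)]
        calc |(x (k + G h) : ℝ) - ρ| * (c' h ^ 2 * Q k ^ (2 * 4 ^ G h))
            = |(x (k + G h) : ℝ) - ρ| * (c' h * Q k ^ 4 ^ G h) ^ 2 := by
              rw [mul_comm 2, pow_mul]; ring
          _ ≤ |(x (k + G h) : ℝ) - ρ| * Q (k + G h) ^ 2 := by gcongr
          _ ≤ C := happ _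
      calc ((M (k + G h) : ℝ) ^ r h * |(x (k + G h) : ℝ) - ρ| ^ n h) ^ 4
          = ((M (k + G h) : ℝ) ^ 4) ^ r h * |(x (k + G h) : ℝ) - ρ| ^ (4 * n h) := by ring
        _ ≤ ((C * C' h ^ 3) * Q k ^ (3 * 4 ^ G h)) ^ r h *
            ((C / c' h ^ 2) / Q k ^ (2 * 4 ^ G h)) ^ (4 * n h) := by gcongr
        _ = _ := by
          rw [mul_pow, div_pow, ← pow_mul, ← pow_mul,
            show 3 * 4 ^ G h * r h = 3 * (r h * 4 ^ G h) by ring,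
            show 2 * 4 ^ G h * (4 * n h) = 8 * (n h * 4 ^ G h) by ring]
          ring
    calc _ = ∏ h, ((M (k + G h) : ℝ) ^ r h * |(x (k + G h) : ℝ) - ρ| ^ n h) ^ 4 := by
          rw [Finset.prod_pow]
      _ ≤ ∏ h, (((C * C' h ^ 3) ^ r h * (C / c' h ^ 2) ^ (4 * n h)) *
          (Q k ^ (3 * (r h * 4 ^ G h)) / Q k ^ (8 * (n h * 4 ^ G h)))) :=
          Finset.prod_le_prod (fun h _ => by positivity) fun h _ => step h
      _ = K * (Q k ^ (3 * ∑ h, r h * 4 ^ G h) / Q k ^ (8 * ∑ h, n h * 4 ^ G h)) := by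
          rw [Finset.prod_mul_distrib, Finset.prod_div_distrib, Finset.prod_pow_eq_pow_sum,
            Finset.prod_pow_eq_pow_sum, Finset.mul_sum, Finset.mul_sum]
      _ ≤ K * (1 / Q k) := by
          apply mul_le_mul_of_nonneg_left _ hK0
          rw [div_le_div_iff₀ (by positivity) hq, one_mul, ← pow_succ]
          exact pow_le_pow_right₀ (hQ k) hn
      _ = K / Q k := by ring
  have hlim : Tendsto (fun k => K / Q k) atTop (𝓝 0) := hQt.const_div_atTop K
  rw [Metric.tendsto_atTop]
  intro ε hε
  obtain ⟨N, hN⟩ := (eventually_atTop).mp (hlim.eventually (gt_mem_nhds (show (0 : ℝ) < ε ^ 4 by positivity)))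
  refine ⟨N, fun k hk => ?_⟩
  have h0 : 0 ≤ ∏ h, ((M (k + G h) : ℝ) ^ r h * |(x (k + G h) : ℝ) - ρ| ^ n h) :=
    Finset.prod_nonneg fun h _ => by positivity
  rw [Real.dist_eq, sub_zero, abs_of_nonneg h0]
  exact lt_of_pow_lt_pow_left₀ 4 hε.le ((key k).trans_lt (hN k hk))

lemma int_value {m : ℕ} (r : Fin m → ℕ) (c : (∀ h, Fin (r h + 1)) → ℚ) (Δ : ℕ)
    (hΔ : ∀ i, ∃ z : ℤ, c i * Δ = z) (M : Fin m → ℕ) (x : Fin m → ℚ)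
    (hx : ∀ h, ∃ z : ℤ, x h * M h = z) (j : Fin m → ℕ) :
    ∃ z : ℤ, (Δ * ∏ h, (M h : ℚ) ^ r h) * hasseEv r c j x = z := by
  choose zc hzc using hΔ
  choose zx hzx using hx
  refine ⟨∑ i : (∀ h, Fin (r h + 1)), zc i * ∏ h, (((i h).1.choose (j h) : ℕ) : ℤ) *
    (zx h ^ ((i h).1 - j h) * (M h : ℤ) ^ (r h - ((i h).1 - j h))), ?_⟩
  push_cast
  unfold hasseEv
  rw [Finset.mul_sum]
  refine Finset.sum_congr rfl fun i _ => ?_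
  rw [← hzc]
  have : ∏ h, (((i h).1.choose (j h) : ℕ) : ℚ) *
    ((zx h : ℚ) ^ ((i h).1 - j h) * (M h : ℚ) ^ (r h - ((i h).1 - j h))) =
    (∏ h, (M h : ℚ) ^ r h) * ∏ h, (((i h).1.choose (j h) : ℕ) : ℚ) * x h ^ ((i h).1 - j h) := by
    rw [← Finset.prod_mul_distrib]
    refine Finset.prod_congr rfl fun h _ => ?_
    have hle : (i h).1 - j h ≤ r h := by have := (i h).2; omega
    have e : (M h : ℚ) ^ r h = (M h : ℚ) ^ ((i h).1 - j h) * (M h : ℚ) ^ (r h - ((i h).1 - j h)) := by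
      rw [← pow_add]; congr 1; omega
    rw [← hzx, mul_pow, e]
    ring
  rw [this]
  ring

lemma exists_common_den {ι : Type*} [Fintype ι] (c : ι → ℚ) :
    ∃ Δ : ℕ, 0 < Δ ∧ ∀ i, ∃ z : ℤ, c i * Δ = z := by
  classical
  refine ⟨∏ i, (c i).den, Finset.prod_pos fun i _ => (c i).den_pos, fun i => ?_⟩
  rw [← Finset.mul_prod_erase Finset.univ _ (Finset.mem_univ i)]
  refine ⟨(c i).num * ((∏ x ∈ Finset.univ.erase i, (c x).den : ℕ) : ℤ), ?_⟩
  push_cast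
  rw [← mul_assoc, Rat.mul_den_eq_num]

open IntermediateField in
theorem softRoth (ρ : ℝ) (hρ : IsAlgebraic ℚ ρ) (x : ℕ → ℚ) (hinj : Function.Injective x)
    (M : ℕ → ℕ) (hM : ∀ k, 0 < M k) (hxM : ∀ k, ∃ z : ℤ, x k * M k = z)
    (Q : ℕ → ℝ) (hQ : ∀ k, 1 ≤ Q k)
    (hQt : Tendsto Q atTop atTop) (c C : ℝ) (hc : 0 < c) (hC : 0 < C)
    (hlo : ∀ k, c * Q k ^ 4 ≤ Q (k + 1)) (hhi : ∀ k, Q (k + 1) ≤ C * Q k ^ 4)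
    (happ : ∀ k, |(x k : ℝ) - ρ| * Q k ^ 2 ≤ C) (hMQ : ∀ k, (M k : ℝ) ^ 4 ≤ C * Q k ^ 3) :
    False := by
  set m : ℕ := 36 * Module.finrank ℚ ℚ⟮ρ⟯ + 1 with hm
  obtain ⟨e, he⟩ := lacunary m
  set E : ℕ := ∑ h, e h with hE
  have heE : ∀ h, e h ≤ E := fun h => Finset.single_le_sum (fun _ _ => Nat.zero_le _) (Finset.mem_univ h)
  let r : Fin m → ℕ := fun h => 4 ^ e h
  let G : Fin m → ℕ := fun h => E - e h
  have hrW : ∀ h, r h * 4 ^ G h = 4 ^ E := by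
    intro h
    simp only [r, G]
    rw [← pow_add]; congr 1; have := heE h; omega
  obtain ⟨f, hf0, hf⟩ := aux_poly ρ hρ (m := m) (by omega) r (fun h => 4 ^ G h) (4 ^ E)
    (by positivity) hrW
  obtain ⟨Δ, hΔ0, hΔ⟩ := exists_common_den f
  have hnv := nonvanish m r f hf0 (fun h k => x (k + G h))
    (fun h k k' hk => by have := hinj hk; omega)
  have hv : ∀ j : (∀ h, Fin (r h + 1)), (∀ h, 24 * (j h).1 ≤ r h) →
      ∀ᶠ k in atTop, hasseEv r f (fun h => (j h).1) (fun h => x (k + G h)) = 0 := by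
    intro j hj
    let D : (∀ h, Fin (r h + 1)) → ℝ := fun i =>
      hasseEv r (fun i => (f i : ℝ)) (fun h => (i h).1) (fun _ => ρ)
    let T : (∀ h, Fin (r h + 1)) → ℕ → ℝ := fun i k =>
      |(Δ : ℝ) * D i * ∏ h, (((i h).1.choose (j h).1 : ℕ) : ℝ)| *
        ∏ h, ((M (k + G h) : ℝ) ^ r h * |(x (k + G h) : ℝ) - ρ| ^ ((i h).1 - (j h).1))
    have hT : ∀ i, Tendsto (T i) atTop (𝓝 0) := by
      intro i
      by_cases hbad : 12 * ∑ h, (i h).1 * 4 ^ G h ≤ 5 * m * 4 ^ E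
      · have : D i = 0 := hf i hbad
        simp [T, this]
      by_cases hji : ∃ h, (i h).1 < (j h).1
      · obtain ⟨h, hh⟩ := hji
        have : ∏ h, (((i h).1.choose (j h).1 : ℕ) : ℝ) = 0 :=
          Finset.prod_eq_zero (Finset.mem_univ h) (by simp [Nat.choose_eq_zero_of_lt hh])
        simp [T, this]
      push Not at hbad hji
      have hlim := size_tendsto ρ x M Q hQ hQt c C hc hC hlo hhi happ hMQ G r
        (fun h => (i h).1 - (j h).1) (by
          have e1 : ∑ h, r h * 4 ^ G h = m * 4 ^ E := by
            rw [Finset.sum_congr rfl (fun h _ => hrW h)]; simp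
          have e2 : ∑ h, ((i h).1 - (j h).1) * 4 ^ G h + ∑ h, (j h).1 * 4 ^ G h =
              ∑ h, (i h).1 * 4 ^ G h := by
            rw [← Finset.sum_add_distrib]
            refine Finset.sum_congr rfl fun h _ => ?_
            rw [← add_mul, Nat.sub_add_cancel (hji h)]
          have e3 : 24 * ∑ h, (j h).1 * 4 ^ G h ≤ m * 4 ^ E := by
            rw [← e1, Finset.mul_sum]
            apply Finset.sum_le_sum
            intro h _
            rw [← mul_assoc]
            exact Nat.mul_le_mul_right _ (hj h)
          rw [e1]
          have e4 : 5 * m * 4 ^ E = 5 * (m * 4 ^ E) := by ring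
          rw [e4] at hbad
          omega)
      simpa [T] using hlim.const_mul _
    have hsum : Tendsto (fun k => ∑ i, T i k) atTop (𝓝 0) := by
      simpa using tendsto_finsetSum Finset.univ (fun i _ => hT i)
    filter_upwards [hsum.eventually (gt_mem_nhds one_pos)] with k hk
    obtain ⟨z, hz⟩ := int_value r f Δ hΔ (fun h => M (k + G h)) (fun h => x (k + G h))
      (fun h => hxM _) (fun h => (j h).1)
    have hMp : (0 : ℚ) < Δ * ∏ h, (M (k + G h) : ℚ) ^ r h := by
      have : ∀ h, (0 : ℚ) < (M (k + G h) : ℚ) ^ r h := fun h => pow_pos (by exact_mod_cast hM _) _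
      have h2 := Finset.prod_pos (s := Finset.univ) fun h _ => this h
      have h3 : (0 : ℚ) < Δ := by exact_mod_cast hΔ0
      positivity
    suffices hz0 : z = 0 by
      rw [hz0, Int.cast_zero] at hz
      exact (mul_eq_zero.mp hz).resolve_left hMp.ne'
    rw [← Int.abs_lt_one_iff]
    have hzR : (z : ℝ) = (Δ * ∏ h, (M (k + G h) : ℝ) ^ r h) *
        hasseEv r (fun i => (f i : ℝ)) (fun h => (j h).1) (fun h => (x (k + G h) : ℝ)) := by
      have := congrArg (fun q : ℚ => (q : ℝ)) hz
      simp only [hasseEv] at this ⊢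
      push_cast at this
      exact this.symm
    rw [hasse_taylor r _ _ _ (fun _ => ρ)] at hzR
    have hle : |(z : ℝ)| ≤ ∑ i, T i k := by
      rw [hzR]
      change |(Δ * ∏ h, (M (k + G h) : ℝ) ^ r h) * ∑ i, D i * ∏ h, (((i h).1.choose (j h).1 : ℕ) : ℝ) *
        ((x (k + G h) : ℝ) - ρ) ^ ((i h).1 - (j h).1)| ≤ _
      rw [Finset.mul_sum]
      refine (Finset.abs_sum_le_sum_abs _ _).trans (Finset.sum_le_sum fun i _ => le_of_eq ?_)
      simp only [T, Finset.abs_prod, abs_pow, abs_mul, Nat.abs_cast, Finset.prod_mul_distrib]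
      ring
    have : |(z : ℝ)| < 1 := hle.trans_lt hk
    exact_mod_cast this
  have hv' : ∀ᶠ k in atTop, ∀ j : (∀ h, Fin (r h + 1)), (∀ h, 24 * (j h).1 ≤ r h) →
      hasseEv r f (fun h => (j h).1) (fun h => x (k + G h)) = 0 := by
    rw [eventually_all]
    intro j
    by_cases hj : ∀ h, 24 * (j h).1 ≤ r h
    · filter_upwards [hv j hj] with k hk _ using hk
    · exact Eventually.of_forall fun k h => absurd h hj
  obtain ⟨k, ⟨j, hj, hjne⟩, hk⟩ := (hnv.and hv').exists
  have hj24 : ∀ h, 24 * j h ≤ r h := fun h =>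
    (Nat.mul_le_mul_left 24 (hj h).le).trans (he h)
  exact hjne (hk (fun h => ⟨j h, by have := hj24 h; omega⟩) hj24)

/-! ### The Thue–Morse side -/

/-- The elementary continued fraction matrix. -/
def cfMat (x : ℕ) : Matrix (Fin 2) (Fin 2) ℝ := !![(x : ℝ), 1; 1, 0]

/-- Product of the first `n` elementary matrices along the sequence `s`. -/
def prodM (s : ℕ → ℕ) : ℕ → Matrix (Fin 2) (Fin 2) ℝ
  | 0 => 1
  | n + 1 => prodM s n * cfMat (s n)

lemma prodM_add (s : ℕ → ℕ) (n m : ℕ) :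
    prodM s (n + m) = prodM s n * prodM (fun i => s (n + i)) m := by
  induction m with
  | zero => simp [prodM]
  | succ m ih => rw [← add_assoc, prodM, ih, prodM, Matrix.mul_assoc]

lemma prodM_congr (s s' : ℕ → ℕ) (n : ℕ) (h : ∀ i < n, s i = s' i) : prodM s n = prodM s' n := by
  induction n with
  | zero => rfl
  | succ n ih => rw [prodM, prodM, ih (fun i hi => h i (by omega)), h n (by omega)]

lemma prodM_cf (t : ℕ → ℕ) (n : ℕ) : prodM t (n + 2) =
    !![(t 0 : ℝ) * cfDen t (n + 1) + cfNum t (n + 1), (t 0 : ℝ) * cfDen t n + cfNum t n;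
      (cfDen t (n + 1) : ℝ), (cfDen t n : ℝ)] := by
  induction n with
  | zero =>
    simp [prodM, cfMat, cfDen, cfNum, Matrix.mul_fin_two]
  | succ n ih =>
    rw [prodM, ih, cfMat, Matrix.mul_fin_two]
    simp only [cfDen, cfNum]
    push_cast
    ext i j
    fin_cases i <;> fin_cases j <;> simp <;> ring

lemma odd_digits_step (n e : ℕ) (he : e < 2) :
    Odd ((Nat.digits 2 (2 * n + e)).sum) ↔ (e = 1 ↔ ¬ Odd ((Nat.digits 2 n).sum)) := by
  rcases Nat.eq_zero_or_pos (2 * n + e) with h | h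
  · have hn : n = 0 := by omega
    have he : e = 0 := by omega
    subst hn; subst he; simp
  · rw [Nat.digits_def' (by norm_num) h, show (2 * n + e) % 2 = e by omega,
      show (2 * n + e) / 2 = n by omega, List.sum_cons]
    interval_cases e
    · simp
    · simp [add_comm 1, Nat.odd_add_one]

lemma odd_digits_two_pow (k : ℕ) : ∀ i < 2 ^ k,
    (Odd ((Nat.digits 2 (2 ^ k + i)).sum) ↔ ¬ Odd ((Nat.digits 2 i).sum)) := by
  induction k with
  | zero =>
    intro i hi
    have : i = 0 := by simpa using hi
    subst this; simp
  | succ k ih =>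
    intro i hi
    have hi' : i / 2 < 2 ^ k := by rw [pow_succ] at hi; omega
    have e1 : 2 ^ (k + 1) + i = 2 * (2 ^ k + i / 2) + i % 2 := by rw [pow_succ]; omega
    have e2 : Odd ((Nat.digits 2 i).sum) ↔ Odd ((Nat.digits 2 (2 * (i / 2) + i % 2)).sum) := by
      rw [Nat.div_add_mod]
    rw [e2, e1, odd_digits_step _ _ (Nat.mod_lt _ (by norm_num)),
      odd_digits_step _ _ (Nat.mod_lt _ (by norm_num)), ih _ hi']
    tauto

/-- Thue–Morse on the alphabet `{a, b}`. -/
def tmS (a b : ℕ) (n : ℕ) : ℕ := if Odd ((Nat.digits 2 n).sum) then a else b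

lemma tmS_shift (a b k i : ℕ) (hi : i < 2 ^ k) : tmS a b (2 ^ k + i) = tmS b a i := by
  unfold tmS
  have := odd_digits_two_pow k i hi
  by_cases h : Odd ((Nat.digits 2 i).sum)
  · rw [if_neg (by tauto), if_pos h]
  · rw [if_pos (by tauto), if_neg h]

lemma prodM_double (a b k : ℕ) : prodM (tmS a b) (2 ^ (k + 1)) =
    prodM (tmS a b) (2 ^ k) * prodM (tmS b a) (2 ^ k) := by
  rw [pow_succ, mul_two, prodM_add]
  congr 1
  exact prodM_congr _ _ _ fun i hi => tmS_shift a b k i hi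

/-- State `(t, τ, M, N)` of the trace recursion. -/
def tmState (E t0 : ℕ) : ℕ → ℕ × ℕ × ℕ × ℕ
  | 0 => (t0, 1, 1, 1)
  | k + 1 =>
    let s := tmState E t0 k
    (s.1 ^ 2 * (E * (s.2.1 * s.2.2.1) ^ 2) + 2, s.1 * s.2.1,
      s.2.2.1 * (E * (s.2.1 * s.2.2.1) ^ 2 + 2), s.2.2.2 * (E * (s.2.1 * s.2.2.1) ^ 2))

lemma quad_step (T g s d σ δ w : ℝ) (hw : w = (g ^ 2 + s ^ 2) * σ ^ 2)
    (h0 : T ^ 2 + d ^ 2 * δ ^ 2 = 4 + (g ^ 2 + s ^ 2) * σ ^ 2) :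
    (!![(T + g * σ) / 2, (s * σ + d * δ) / 2; (s * σ - d * δ) / 2, (T - g * σ) / 2] *
      !![(T + g * σ) / 2, (s * σ - d * δ) / 2; (s * σ + d * δ) / 2, (T - g * σ) / 2]) *
    (!![(T + g * σ) / 2, (s * σ - d * δ) / 2; (s * σ + d * δ) / 2, (T - g * σ) / 2] *
      !![(T + g * σ) / 2, (s * σ + d * δ) / 2; (s * σ - d * δ) / 2, (T - g * σ) / 2]) =
    !![(T ^ 2 * w + 2 + g * (T * (w + 2) * σ)) / 2,
        (s * (T * (w + 2) * σ) + d * (T * w * δ)) / 2;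
      (s * (T * (w + 2) * σ) - d * (T * w * δ)) / 2,
        (T ^ 2 * w + 2 - g * (T * (w + 2) * σ)) / 2] := by
  subst hw
  simp only [Matrix.mul_fin_two]
  congr 1
  ext i j
  fin_cases i <;> fin_cases j
  · simp
    linear_combination (T * ((T + g * σ) / 2) / 4 - T * ((T - g * σ) / 2) / 4 + 1 / 2 +
      (T ^ 2 + d ^ 2 * δ ^ 2 - 4 - (g ^ 2 + s ^ 2) * σ ^ 2) / 16) * h0
  · simp
    linear_combination (T * ((s * σ + d * δ) / 2) / 4 + T * ((s * σ - d * δ) / 2) / 4) * h0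
  · simp
    linear_combination (T * ((s * σ - d * δ) / 2) / 4 + T * ((s * σ + d * δ) / 2) / 4) * h0
  · simp
    linear_combination (T * ((T - g * σ) / 2) / 4 - T * ((T + g * σ) / 2) / 4 + 1 / 2 +
      (T ^ 2 + d ^ 2 * δ ^ 2 - 4 - (g ^ 2 + s ^ 2) * σ ^ 2) / 16) * h0

/-- Explicit form of the matrices `A_{2K+1}` and `B_{2K+1}`. -/
lemma matrix_form (a b : ℕ) (t τ M N : ℕ → ℕ) (E : ℕ) (hE : E = (a * b) ^ 2 + (a + b) ^ 2)
    (ht0 : t 0 = a * b + 2) (hτ0 : τ 0 = 1) (hM0 : M 0 = 1) (hN0 : N 0 = 1)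
    (ht : ∀ k, t (k + 1) = t k ^ 2 * (E * (τ k * M k) ^ 2) + 2)
    (hτ : ∀ k, τ (k + 1) = t k * τ k)
    (hM : ∀ k, M (k + 1) = M k * (E * (τ k * M k) ^ 2 + 2))
    (hN : ∀ k, N (k + 1) = N k * (E * (τ k * M k) ^ 2)) (k : ℕ) :
    ((t k : ℝ) ^ 2 + ((b : ℝ) - a) ^ 2 * ((τ k : ℝ) * N k) ^ 2 = 4 + E * ((τ k : ℝ) * M k) ^ 2) ∧
    prodM (tmS a b) (2 ^ (2 * k + 1)) =
      !![((t k : ℝ) + a * b * (τ k * M k)) / 2,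
          (((a : ℝ) + b) * (τ k * M k) + (b - a) * (τ k * N k)) / 2;
        (((a : ℝ) + b) * (τ k * M k) - (b - a) * (τ k * N k)) / 2,
          ((t k : ℝ) - a * b * (τ k * M k)) / 2] ∧
    prodM (tmS b a) (2 ^ (2 * k + 1)) =
      !![((t k : ℝ) + a * b * (τ k * M k)) / 2,
          (((a : ℝ) + b) * (τ k * M k) - (b - a) * (τ k * N k)) / 2;
        (((a : ℝ) + b) * (τ k * M k) + (b - a) * (τ k * N k)) / 2,
          ((t k : ℝ) - a * b * (τ k * M k)) / 2] := by
  induction k with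
  | zero =>
    refine ⟨?_, ?_, ?_⟩
    · rw [ht0, hτ0, hM0, hN0, hE]; push_cast; ring
    · rw [ht0, hτ0, hM0, hN0]
      simp [prodM, cfMat, tmS, Matrix.mul_fin_two]
      refine ⟨⟨?_, ?_⟩, ?_⟩ <;> ring
    · rw [ht0, hτ0, hM0, hN0]
      simp [prodM, cfMat, tmS, Matrix.mul_fin_two]
      refine ⟨⟨?_, ?_⟩, ?_⟩ <;> ring
  | succ k ih =>
    obtain ⟨hdet, hA, hB⟩ := ih
    have hE' : (E : ℝ) = ((a : ℝ) * b) ^ 2 + ((a : ℝ) + b) ^ 2 := by rw [hE]; push_cast; ring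
    have e1 : ((t (k + 1) : ℕ) : ℝ) = (t k : ℝ) ^ 2 * (E * ((τ k : ℝ) * M k) ^ 2) + 2 := by
      rw [ht]; push_cast; ring
    have e2 : ((τ (k + 1) : ℕ) : ℝ) * M (k + 1) =
        t k * (E * ((τ k : ℝ) * M k) ^ 2 + 2) * (τ k * M k) := by
      rw [hτ, hM]; push_cast; ring
    have e3 : ((τ (k + 1) : ℕ) : ℝ) * N (k + 1) =
        t k * (E * ((τ k : ℝ) * M k) ^ 2) * (τ k * N k) := by
      rw [hτ, hN]; push_cast; ring
    rw [show 2 * (k + 1) + 1 = (2 * k + 1) + 1 + 1 by ring]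
    rw [prodM_double a b (2 * k + 1 + 1), prodM_double b a (2 * k + 1 + 1),
      prodM_double a b (2 * k + 1), prodM_double b a (2 * k + 1), hA, hB, e1, e2, e3, hE']
    rw [hE'] at hdet
    generalize (τ k : ℝ) * M k = σ at *
    generalize (τ k : ℝ) * N k = δ at *
    generalize (t k : ℝ) = T at *
    generalize (a : ℝ) = x at *
    generalize (b : ℝ) = y at *
    set w : ℝ := ((x * y) ^ 2 + (x + y) ^ 2) * σ ^ 2 with hw
    refine ⟨?_, ?_, ?_⟩
    · linear_combination T ^ 2 * w ^ 2 * hdet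
    · exact quad_step T (x * y) (x + y) (y - x) σ δ w hw hdet
    · have := quad_step T (x * y) (x + y) (y - x) σ (-δ) w hw (by rw [neg_sq]; exact hdet)
      simpa only [mul_neg, sub_neg_eq_add, ← sub_eq_add_neg] using this

/-! ### Growth of the trace recursion -/

lemma step_bounds (E D T σ δ : ℝ) (hD : 0 ≤ D) (hDE : D + 1 ≤ E) (hσ : 1 ≤ σ) (hT : 0 ≤ T)
    (hδ0 : 0 ≤ δ) (hδ : δ ≤ σ) (h : T ^ 2 + D * δ ^ 2 = 4 + E * σ ^ 2) :
    σ ≤ T ∧ T ≤ (4 + E) * σ := by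
  have hδ2 : δ ^ 2 ≤ σ ^ 2 := by gcongr
  have hσ2 : 1 ≤ σ ^ 2 := one_le_pow₀ hσ
  constructor
  · apply le_of_sq_le_sq _ hT
    nlinarith [mul_le_mul_of_nonneg_left hδ2 hD]
  · apply le_of_sq_le_sq _ (by nlinarith)
    have : 0 ≤ D * δ ^ 2 := by positivity
    nlinarith [mul_nonneg (by linarith : 0 ≤ E) (sq_nonneg σ),
      mul_nonneg (mul_self_nonneg E) (sq_nonneg σ)]

lemma growth (E : ℕ) (D : ℝ) (hD : 0 ≤ D) (hDE : D + 1 ≤ E) (t τ M N : ℕ → ℕ)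
    (ht0 : 0 < t 0) (hτ0 : τ 0 = 1) (hM0 : M 0 = 1) (hN0 : N 0 = 1)
    (ht : ∀ k, t (k + 1) = t k ^ 2 * (E * (τ k * M k) ^ 2) + 2)
    (hτ : ∀ k, τ (k + 1) = t k * τ k)
    (hM : ∀ k, M (k + 1) = M k * (E * (τ k * M k) ^ 2 + 2))
    (hN : ∀ k, N (k + 1) = N k * (E * (τ k * M k) ^ 2))
    (hinv : ∀ k, (t k : ℝ) ^ 2 + D * ((τ k : ℝ) * N k) ^ 2 = 4 + E * ((τ k : ℝ) * M k) ^ 2) :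
    (∀ k, 0 < M k ∧ 0 < N k ∧ N k ≤ M k) ∧
    (∀ k, (1 : ℝ) ≤ (τ k : ℝ) * M k) ∧
    Tendsto (fun k => (τ k : ℝ) * M k) atTop atTop ∧
    (∀ k, (t k : ℝ) ≤ (4 + E) * ((τ k : ℝ) * M k)) ∧
    (∀ k, ((τ k : ℝ) * M k) ^ 4 ≤ (τ (k + 1) : ℝ) * M (k + 1)) ∧
    (∀ k, (τ (k + 1) : ℝ) * M (k + 1) ≤ (4 + E) * (2 + E) * ((τ k : ℝ) * M k) ^ 4) ∧
    (∃ C : ℝ, 0 < C ∧ ∀ k, (M k : ℝ) ^ 4 ≤ C * ((τ k : ℝ) * M k) ^ 3) ∧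
    Function.Injective (fun k => (N k : ℚ) / M k) ∧
    (∀ ρ : ℝ, Tendsto (fun k => (N k : ℝ) / M k) atTop (𝓝 ρ) →
      ∀ k, |(N k : ℝ) / M k - ρ| * ((τ k : ℝ) * M k) ^ 2 ≤ 4) := by
  have hE1 : (1 : ℝ) ≤ E := by linarith
  have hEn : 0 < E := by
    rcases Nat.eq_zero_or_pos E with h | h
    · subst h; norm_num at hE1
    · exact h
  have htp : ∀ k, 0 < t k := by
    intro k; cases k with
    | zero => exact ht0
    | succ k => rw [ht]; omega
  have hpos : ∀ k, 0 < τ k ∧ 0 < M k ∧ 0 < N k ∧ N k ≤ M k := by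
    intro k
    induction k with
    | zero => rw [hτ0, hM0, hN0]; norm_num
    | succ k ih =>
      obtain ⟨h1, h2, h3, h4⟩ := ih
      have := htp k
      rw [hτ, hM, hN]
      refine ⟨by positivity, by positivity, by positivity, ?_⟩
      exact Nat.mul_le_mul h4 (by omega)
  have hσ1 : ∀ k, (1 : ℝ) ≤ (τ k : ℝ) * M k := by
    intro k
    have : 1 ≤ τ k * M k := Nat.mul_pos (hpos k).1 (hpos k).2.1
    exact_mod_cast this
  have hst : ∀ k, (τ k : ℝ) * M k ≤ t k ∧ (t k : ℝ) ≤ (4 + E) * ((τ k : ℝ) * M k) := by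
    intro k
    refine step_bounds E D (t k) _ ((τ k : ℝ) * N k) hD hDE (hσ1 k) (by positivity)
      (by positivity) ?_ (hinv k)
    have : (N k : ℝ) ≤ M k := by exact_mod_cast (hpos k).2.2.2
    gcongr
  have hσs : ∀ k, ((τ (k + 1) : ℕ) : ℝ) * M (k + 1) =
        t k * (E * ((τ k : ℝ) * M k) ^ 2 + 2) * (τ k * M k) := by
    intro k
    rw [hτ, hM]; push_cast; ring
  have hlo : ∀ k, ((τ k : ℝ) * M k) ^ 4 ≤ (τ (k + 1) : ℝ) * M (k + 1) := by
    intro k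
    rw [hσs]
    have h1 := hσ1 k
    have h2 := (hst k).1
    generalize (τ k : ℝ) * M k = σ at *
    have : σ ^ 2 ≤ E * σ ^ 2 + 2 := by nlinarith [sq_nonneg σ]
    calc σ ^ 4 = σ * σ ^ 2 * σ := by ring
      _ ≤ _ := by gcongr
  have hhi : ∀ k, (τ (k + 1) : ℝ) * M (k + 1) ≤ (4 + E) * (2 + E) * ((τ k : ℝ) * M k) ^ 4 := by
    intro k
    rw [hσs]
    have h1 := hσ1 k
    have h2 := (hst k).2
    generalize (τ k : ℝ) * M k = σ at *
    have : E * σ ^ 2 + 2 ≤ (2 + E) * σ ^ 2 := by nlinarith [one_le_pow₀ h1 (n := 2)]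
    calc (t k : ℝ) * (E * σ ^ 2 + 2) * σ ≤ ((4 + E) * σ) * ((2 + E) * σ ^ 2) * σ := by gcongr
      _ = _ := by ring
  have h3 : ∀ k, 3 * ((τ k : ℝ) * M k) ≤ (τ (k + 1) : ℝ) * M (k + 1) := by
    intro k
    rw [hσs]
    have h1 := hσ1 k
    have h2 := (hst k).1
    generalize (τ k : ℝ) * M k = σ at *
    have h4 : 3 ≤ E * σ ^ 2 + 2 := by nlinarith [one_le_pow₀ h1 (n := 2)]
    have h5 : 1 * 3 ≤ (t k : ℝ) * (E * σ ^ 2 + 2) := by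
      apply mul_le_mul (by linarith) h4 (by norm_num) (by positivity)
    nlinarith
  have htend : Tendsto (fun k => (τ k : ℝ) * M k) atTop atTop := by
    have : ∀ k, (3 : ℝ) ^ k ≤ (τ k : ℝ) * M k := by
      intro k
      induction k with
      | zero => simpa using hσ1 0
      | succ k ih => rw [pow_succ]; linarith [h3 k]
    exact tendsto_atTop_mono this (tendsto_pow_atTop_atTop_of_one_lt (by norm_num))
  have hMpos : ∀ k, (0 : ℝ) < M k := fun k => by exact_mod_cast (hpos k).2.1
  have hxs : ∀ k, (N (k + 1) : ℝ) / M (k + 1) =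
      (N k : ℝ) / M k - 2 * ((N k : ℝ) / M k) / (E * ((τ k : ℝ) * M k) ^ 2 + 2) := by
    intro k
    rw [hN, hM]
    have := hMpos k
    have h : (0 : ℝ) < E * ((τ k : ℝ) * M k) ^ 2 + 2 := by positivity
    push_cast
    field_simp
    ring
  have hx01 : ∀ k, 0 < (N k : ℝ) / M k ∧ (N k : ℝ) / M k ≤ 1 := by
    intro k
    have h1 : (0 : ℝ) < N k := by exact_mod_cast (hpos k).2.2.1
    have h2 : (N k : ℝ) ≤ M k := by exact_mod_cast (hpos k).2.2.2
    exact ⟨div_pos h1 (hMpos k), div_le_one_of_le₀ h2 (hMpos k).le⟩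
  have hanti : StrictAnti (fun k => (N k : ℝ) / M k) := by
    apply strictAnti_nat_of_succ_lt
    intro k
    rw [hxs]
    have := (hx01 k).1
    have : 0 < 2 * ((N k : ℝ) / M k) / (E * ((τ k : ℝ) * M k) ^ 2 + 2) := by positivity
    linarith
  refine ⟨fun k => (hpos k).2, hσ1, htend, fun k => (hst k).2, hlo, hhi, ?_, ?_, ?_⟩
  · obtain ⟨K, hK⟩ := (htend.eventually_ge_atTop ((2 + E : ℝ) ^ 4)).exists_forall_of_atTop
    set r : ℕ → ℝ := fun k => (M k : ℝ) ^ 4 / ((τ k : ℝ) * M k) ^ 3 with hr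
    have hr0 : ∀ k, 0 ≤ r k := fun k => by simp only [hr]; positivity
    have hrs : ∀ k, K ≤ k → r (k + 1) ≤ r k := by
      intro k hk
      have h1 := hσ1 k
      have h2 := hK k hk
      have h4 := hlo k
      simp only [hr]
      have hMs : (M (k + 1) : ℝ) = M k * (E * ((τ k : ℝ) * M k) ^ 2 + 2) := by
        rw [hM]; push_cast; ring
      generalize (τ (k + 1) : ℝ) * M (k + 1) = s at *
      rw [hMs]
      generalize (τ k : ℝ) * M k = σ at *
      have h5 : E * σ ^ 2 + 2 ≤ (2 + E) * σ ^ 2 := by nlinarith [one_le_pow₀ h1 (n := 2)]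
      have hσ0 : 0 < σ := by linarith
      calc ((M k : ℝ) * (E * σ ^ 2 + 2)) ^ 4 / s ^ 3
          ≤ ((M k : ℝ) * ((2 + E) * σ ^ 2)) ^ 4 / (σ ^ 4) ^ 3 := by gcongr
        _ = (M k : ℝ) ^ 4 / σ ^ 4 * (2 + E) ^ 4 := by field_simp
        _ ≤ (M k : ℝ) ^ 4 / σ ^ 4 * σ := by gcongr
        _ = _ := by field_simp
    have hb : ∀ k, r k ≤ ∑ i ∈ Finset.range (K + 1), r i := by
      intro k
      induction k with
      | zero => exact Finset.single_le_sum (f := r) (fun i _ => hr0 i) (by simp)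
      | succ k ih =>
        by_cases h : k + 1 ≤ K
        · exact Finset.single_le_sum (f := r) (fun i _ => hr0 i) (by simp; omega)
        · exact (hrs k (by omega)).trans ih
    refine ⟨∑ i ∈ Finset.range (K + 1), r i + 1, ?_, ?_⟩
    · have := Finset.sum_nonneg (s := Finset.range (K + 1)) fun i _ => hr0 i
      linarith
    · intro k
      have h1 := hσ1 k
      have : 0 < ((τ k : ℝ) * M k) ^ 3 := by positivity
      rw [← div_le_iff₀ this]
      linarith [hb k]
  · intro i j hij
    apply hanti.injective
    have := congrArg (fun q : ℚ => (q : ℝ)) hij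
    simpa using this
  · intro ρ hρ k
    have hz : ∀ k, (0 : ℝ) < E * ((τ k : ℝ) * M k) ^ 2 + 2 := fun k => by positivity
    have hmono : Monotone (fun k => (N k : ℝ) / M k - 4 / (E * ((τ k : ℝ) * M k) ^ 2 + 2)) := by
      apply monotone_nat_of_le_succ
      intro k
      simp only [hxs k]
      have hx := (hx01 k).2
      have h2 : 2 * (E * ((τ k : ℝ) * M k) ^ 2 + 2) ≤
          E * ((τ (k + 1) : ℝ) * M (k + 1)) ^ 2 + 2 := by
        have h1 := hσ1 k
        have h4 := h3 k
        generalize (τ k : ℝ) * M k = σ at *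
        generalize (τ (k + 1) : ℝ) * M (k + 1) = s at *
        have : (3 * σ) ^ 2 ≤ s ^ 2 := by gcongr
        have h6 : 1 ≤ E * σ ^ 2 := by nlinarith [one_le_pow₀ h1 (n := 2)]
        nlinarith
      have e1 : 4 / (E * ((τ (k + 1) : ℝ) * M (k + 1)) ^ 2 + 2) ≤
          4 / (2 * (E * ((τ k : ℝ) * M k) ^ 2 + 2)) := by
        have := hz k
        gcongr
      have e2 : 4 / (2 * (E * ((τ k : ℝ) * M k) ^ 2 + 2)) =
          2 / (E * ((τ k : ℝ) * M k) ^ 2 + 2) := by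
        have := hz k
        field_simp; norm_num
      have e3 : 2 * ((N k : ℝ) / M k) / (E * ((τ k : ℝ) * M k) ^ 2 + 2) ≤
          2 / (E * ((τ k : ℝ) * M k) ^ 2 + 2) := by
        have := hz k
        gcongr
        linarith
      have e4 : 4 / (E * ((τ k : ℝ) * M k) ^ 2 + 2) =
          2 / (E * ((τ k : ℝ) * M k) ^ 2 + 2) + 2 / (E * ((τ k : ℝ) * M k) ^ 2 + 2) := by ring
      linarith
    have hge : ρ ≤ (N k : ℝ) / M k := hanti.antitone.le_of_tendsto hρ k
    have hle : (N k : ℝ) / M k - 4 / (E * ((τ k : ℝ) * M k) ^ 2 + 2) ≤ ρ := by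
      refine ge_of_tendsto hρ ?_
      filter_upwards [eventually_ge_atTop k] with m hm
      have h1 := hmono hm
      have := hz m
      have h2 : 0 ≤ 4 / (E * ((τ m : ℝ) * M m) ^ 2 + 2) := by positivity
      simp only at h1
      linarith
    rw [abs_of_nonneg (by linarith)]
    have h1 := hσ1 k
    have hzk := hz k
    generalize (τ k : ℝ) * M k = σ at *
    calc ((N k : ℝ) / M k - ρ) * σ ^ 2 ≤ 4 / (E * σ ^ 2 + 2) * σ ^ 2 := by
          gcongr; linarith
      _ ≤ 4 := by
          rw [div_mul_eq_mul_div, div_le_iff₀ hzk]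
          nlinarith [sq_nonneg σ]

/-! ### The limit of `N / M` and the conclusion -/

lemma cfDen_pos (t : ℕ → ℕ) (h : ∀ n, 0 < t n) (n : ℕ) :
    0 < cfDen t n ∧ 0 < cfDen t (n + 1) := by
  induction n with
  | zero => exact ⟨by simp [cfDen], by simpa [cfDen] using h 1⟩
  | succ n ih =>
    refine ⟨ih.2, ?_⟩
    rw [cfDen]
    exact Nat.add_pos_right _ ih.1

lemma limit_bound (a b α T σ δ E p1 q1 p0 q0 ξ x ρ : ℝ) (ha : 0 < a) (hb : 0 < b) (hab : a ≠ b)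
    (hσ : 1 ≤ σ) (hξ : ξ = b + α) (hx : δ = x * σ) (hx0 : 0 ≤ x) (hx1 : x ≤ 1)
    (hT : T ≤ (4 + E) * σ) (hE : 0 ≤ E)
    (hq1 : 0 < q1) (hq0 : 0 < q0)
    (hρ : ρ = (ξ ^ 2 * (a + b) - 2 * (a * b) * ξ - (a + b)) / ((b - a) * (1 + ξ ^ 2)))
    (h1 : b * q1 + p1 = (T + a * b * σ) / 2) (h2 : b * q0 + p0 = ((a + b) * σ + (b - a) * δ) / 2)
    (h3 : q1 = ((a + b) * σ - (b - a) * δ) / 2) (h4 : q0 = (T - a * b * σ) / 2) :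
    |x - ρ| ≤ (2 * (|ξ| * (a + b)) * |p1 / q1 - α| + 2 * (4 + E) * |p0 / q0 - α|) /
      (|b - a| * (1 + ξ ^ 2)) := by
  have hc : b - a ≠ 0 := sub_ne_zero.mpr (Ne.symm hab)
  have hz : 0 < 1 + ξ ^ 2 := by positivity
  have hσ0 : 0 < σ := by linarith
  have hca : 0 < |b - a| := abs_pos.mpr hc
  rw [le_div_iff₀ (by positivity)]
  have key : (x - ρ) * ((b - a) * (1 + ξ ^ 2)) * σ =
      2 * ξ * ((p1 / q1 - α) * q1) + 2 * ((p0 / q0 - α) * q0) := by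
    have e1 : (p1 / q1 - α) * q1 = p1 - α * q1 := by field_simp
    have e0 : (p0 / q0 - α) * q0 = p0 - α * q0 := by field_simp
    have e : (x - ρ) * ((b - a) * (1 + ξ ^ 2)) = x * ((b - a) * (1 + ξ ^ 2)) -
      (ξ ^ 2 * (a + b) - 2 * (a * b) * ξ - (a + b)) := by
      rw [sub_mul, hρ, div_mul_cancel₀ _ (mul_ne_zero hc hz.ne')]
    have hα : α = ξ - b := by rw [hξ]; ring
    rw [e1, e0, e, hα]
    have h1' : p1 = (T + a * b * σ) / 2 - b * q1 := by linarith
    have h2' : p0 = ((a + b) * σ + (b - a) * δ) / 2 - b * q0 := by linarith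
    rw [h1', h2', h3, h4, hx]
    ring
  have hq1σ : q1 ≤ (a + b) * σ := by
    rw [h3, hx]
    nlinarith [mul_nonneg hb.le (mul_nonneg hx0 hσ0.le),
      mul_nonneg ha.le (mul_nonneg (sub_nonneg.mpr hx1) hσ0.le), mul_pos ha hσ0, mul_pos hb hσ0]
  have hq0σ : q0 ≤ (4 + E) * σ := by
    have := mul_pos (mul_pos ha hb) hσ0
    have := mul_nonneg hE hσ0.le
    nlinarith
  have habs : |x - ρ| * (|b - a| * (1 + ξ ^ 2)) * σ ≤
      (2 * (|ξ| * (a + b)) * |p1 / q1 - α| + 2 * (4 + E) * |p0 / q0 - α|) * σ := by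
    calc |x - ρ| * (|b - a| * (1 + ξ ^ 2)) * σ
        = |(x - ρ) * ((b - a) * (1 + ξ ^ 2)) * σ| := by
          rw [abs_mul, abs_mul, abs_mul, abs_of_pos hσ0, abs_of_pos hz]
      _ = |2 * ξ * ((p1 / q1 - α) * q1) + 2 * ((p0 / q0 - α) * q0)| := by rw [key]
      _ ≤ |2 * ξ * ((p1 / q1 - α) * q1)| + |2 * ((p0 / q0 - α) * q0)| := abs_add_le _ _
      _ = 2 * |ξ| * (|p1 / q1 - α| * q1) + 2 * (|p0 / q0 - α| * q0) := by
          simp only [abs_mul, abs_of_pos hq1, abs_of_pos hq0, abs_two]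
      _ ≤ 2 * |ξ| * (|p1 / q1 - α| * ((a + b) * σ)) + 2 * (|p0 / q0 - α| * ((4 + E) * σ)) := by
          gcongr
      _ = _ := by ring
  exact le_of_mul_le_mul_right habs hσ0

/-- The continued fraction whose partial quotients follow the Thue–Morse sequence on the
alphabet `{a, b}` of two distinct positive integers (with `t n = a` when the sum of the
binary digits of `n` is odd and `t n = b` when it is even) is transcendental. -/
theorem statement15 (a b : ℕ) (ha : 0 < a) (hb : 0 < b) (hab : a ≠ b)
    (t : ℕ → ℕ)
    (ht : ∀ n : ℕ, t n = if Odd ((Nat.digits 2 n).sum) then a else b)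
    (α : ℝ)
    (hα : Tendsto (fun n => (cfNum t n : ℝ) / cfDen t n) atTop (𝓝 α)) :
    Transcendental ℚ α := by
  intro halg
  have htm : t = tmS a b := funext ht
  have ha' : (0 : ℝ) < a := by exact_mod_cast ha
  have hb' : (0 : ℝ) < b := by exact_mod_cast hb
  have hab' : (a : ℝ) ≠ b := by exact_mod_cast hab
  set E : ℕ := (a * b) ^ 2 + (a + b) ^ 2 with hE
  have hER : (E : ℝ) = ((a : ℝ) * b) ^ 2 + ((a : ℝ) + b) ^ 2 := by rw [hE]; push_cast; ring
  obtain ⟨T, τ, M, N, hT0, hτ0, hM0, hN0, hT, hτ, hM, hN⟩ : ∃ T τ M N : ℕ → ℕ,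
      T 0 = a * b + 2 ∧ τ 0 = 1 ∧ M 0 = 1 ∧ N 0 = 1 ∧
      (∀ k, T (k + 1) = T k ^ 2 * (E * (τ k * M k) ^ 2) + 2) ∧
      (∀ k, τ (k + 1) = T k * τ k) ∧
      (∀ k, M (k + 1) = M k * (E * (τ k * M k) ^ 2 + 2)) ∧
      (∀ k, N (k + 1) = N k * (E * (τ k * M k) ^ 2)) :=
    ⟨fun k => (tmState E (a * b + 2) k).1, fun k => (tmState E (a * b + 2) k).2.1,
      fun k => (tmState E (a * b + 2) k).2.2.1, fun k => (tmState E (a * b + 2) k).2.2.2,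
      rfl, rfl, rfl, rfl, fun _ => rfl, fun _ => rfl, fun _ => rfl, fun _ => rfl⟩
  have hform := matrix_form a b T τ M N E hE hT0 hτ0 hM0 hN0 hT hτ hM hN
  obtain ⟨hpos, hσ1, htend, hTσ, hlo, hhi, ⟨C, hC, hMC⟩, hinj, happ⟩ :=
    growth E (((b : ℝ) - a) ^ 2) (sq_nonneg _)
      (by
        rw [hER]
        have h1 : (1 : ℝ) ≤ a := by exact_mod_cast ha
        have h2 : (1 : ℝ) ≤ b := by exact_mod_cast hb
        nlinarith [mul_le_mul h1 h2 (by norm_num) (by linarith), sq_nonneg ((a : ℝ) * b)])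
      T τ M N (by omega) hτ0 hM0 hN0 hT hτ hM hN (fun k => (hform k).1)
  set ξ : ℝ := b + α with hξ
  set ρ : ℝ := (ξ ^ 2 * (a + b) - 2 * (a * b) * ξ - (a + b)) / ((b - a) * (1 + ξ ^ 2)) with hρ
  have hρalg : IsAlgebraic ℚ ρ := by
    have han : ∀ n : ℕ, IsAlgebraic ℚ (n : ℝ) := fun n => isAlgebraic_nat n
    have hone : IsAlgebraic ℚ (1 : ℝ) := isAlgebraic_one
    have htwo : IsAlgebraic ℚ (2 : ℝ) := by exact_mod_cast han 2
    have hξa : IsAlgebraic ℚ ξ := (han b).add halg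
    rw [hρ, div_eq_mul_inv]
    refine IsAlgebraic.mul ?_ (IsAlgebraic.inv ?_)
    · exact (((hξa.pow 2).mul ((han a).add (han b))).sub
        ((htwo.mul ((han a).mul (han b))).mul hξa)).sub ((han a).add (han b))
    · exact ((han b).sub (han a)).mul (hone.add (hξa.pow 2))
  have htpos : ∀ n, 0 < t n := by
    intro n; rw [ht]; split_ifs <;> assumption
  have hMpos : ∀ k, (0 : ℝ) < M k := fun k => by exact_mod_cast (hpos k).1
  have hx01 : ∀ k, 0 ≤ (N k : ℝ) / M k ∧ (N k : ℝ) / M k ≤ 1 := by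
    intro k
    have h2 : (N k : ℝ) ≤ M k := by exact_mod_cast (hpos k).2.2
    exact ⟨by positivity, div_le_one_of_le₀ h2 (hMpos k).le⟩
  have hlim : Tendsto (fun k => (N k : ℝ) / M k) atTop (𝓝 ρ) := by
    have hn : Tendsto (fun k : ℕ => 2 ^ (2 * k + 1) - 2) atTop atTop := by
      refine tendsto_atTop_mono (fun k => ?_) tendsto_id
      have h1 : k < 2 ^ k := Nat.lt_two_pow_self
      have h2 : 2 ^ (2 * k + 1) = 2 * (2 ^ k * 2 ^ k) := by rw [← pow_add]; ring
      have h3 : k + 1 ≤ 2 ^ k * 2 ^ k := by nlinarith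
      simp only [id]
      omega
    have hu0 : Tendsto (fun k : ℕ => |(cfNum t (2 ^ (2 * k + 1) - 2) : ℝ) /
        cfDen t (2 ^ (2 * k + 1) - 2) - α|) atTop (𝓝 0) := by
      have := ((hα.comp hn).sub_const α).abs
      simpa using this
    have hu1 : Tendsto (fun k : ℕ => |(cfNum t (2 ^ (2 * k + 1) - 2 + 1) : ℝ) /
        cfDen t (2 ^ (2 * k + 1) - 2 + 1) - α|) atTop (𝓝 0) := by
      have := ((hα.comp ((tendsto_add_atTop_nat 1).comp hn)).sub_const α).abs
      simpa [Function.comp_def] using this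
    rw [tendsto_iff_norm_sub_tendsto_zero]
    have hbd := ((hu1.const_mul (2 * (|ξ| * ((a : ℝ) + b)))).add
      (hu0.const_mul (2 * (4 + (E : ℝ))))).div_const (|(b : ℝ) - a| * (1 + ξ ^ 2))
    simp only [mul_zero, add_zero, zero_div] at hbd
    refine squeeze_zero (fun k => norm_nonneg _) (fun k => ?_) hbd
    rw [Real.norm_eq_abs]
    have h2 : 2 ^ (2 * k + 1) - 2 + 2 = 2 ^ (2 * k + 1) := by
      have : 2 ^ (2 * k + 1) = 2 * 2 ^ (2 * k) := by rw [pow_succ]; ring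
      have := Nat.one_le_two_pow (n := 2 * k)
      omega
    have hA := (hform k).2.1
    have hcf := prodM_cf (tmS a b) (2 ^ (2 * k + 1) - 2)
    rw [h2, hA, ← htm] at hcf
    have ht0 : t 0 = b := by rw [ht]; simp
    rw [ht0] at hcf
    have c00 := congrFun (congrFun hcf 0) 0
    have c01 := congrFun (congrFun hcf 0) 1
    have c10 := congrFun (congrFun hcf 1) 0
    have c11 := congrFun (congrFun hcf 1) 1
    simp only [Matrix.of_apply, Matrix.cons_val', Matrix.cons_val_zero, Matrix.cons_val_one,
      Matrix.cons_val_fin_one] at c00 c01 c10 c11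
    have hd := cfDen_pos t htpos (2 ^ (2 * k + 1) - 2)
    refine limit_bound a b α (T k) ((τ k : ℝ) * M k) ((τ k : ℝ) * N k) E _ _ _ _ ξ
      ((N k : ℝ) / M k) ρ ha' hb' hab' (hσ1 k) hξ ?_ (hx01 k).1 (hx01 k).2 (hTσ k) (by positivity)
      (by exact_mod_cast hd.2) (by exact_mod_cast hd.1) hρ c00.symm c01.symm c10.symm c11.symm
    have := hMpos k
    field_simp
  have hC1 : 0 < C + (4 + E) * (2 + E) + 4 := by positivity
  refine softRoth ρ hρalg (fun k => (N k : ℚ) / M k) hinj M (fun k => (hpos k).1) ?_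
    (fun k => (τ k : ℝ) * M k) hσ1 htend 1 (C + (4 + E) * (2 + E) + 4) one_pos hC1 ?_ ?_ ?_ ?_
  · intro k
    refine ⟨N k, ?_⟩
    have : (M k : ℚ) ≠ 0 := by exact_mod_cast (hpos k).1.ne'
    simp only [Int.cast_natCast]
    field_simp
  · intro k
    rw [one_mul]; exact hlo k
  · intro k
    refine (hhi k).trans ?_
    have h1 := hσ1 k
    gcongr
    linarith
  · intro k
    have h1 := happ ρ hlim k
    have h2 : (0 : ℝ) ≤ (4 + E) * (2 + E) := by positivity
    push_cast
    linarith
  · intro k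
    refine (hMC k).trans ?_
    have h1 := hσ1 k
    have h2 : (0 : ℝ) ≤ (4 + E) * (2 + E) := by positivity
    gcongr
    linarith
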